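/- arXiv:0812.4142 — 5 statements merged into one kernel-verified Lean document; each statement's English description precedes it below -/
import Mathlib

section
/- Let $-1 < v < u < 0$ be real numbers, let $t > 0$, and let $g : (-1, u] \to \mathbb{R}$ be continuous (playing the role of $f_L'$). Define $\theta(\lambda) = \frac{1}{2\sqrt{u-\lambda}} \int_\lambda^u \frac{g(\xi)}{\sqrt{\xi-\lambda}}\,d\xi$ for $\lambda \in (-1, u)$, and $\phi(\lambda) = \int_\lambda^u (g(\xi) + 6t)\sqrt{\xi - \lambda}\,d\xi$. If $6t + \theta(\lambda) < 0$ for every $\lambda \in [-1, u) \setminus \{v\}$, then $\phi$ is differentiable on $(-1, u)$ and $\phi'(\lambda) > 0$ for every $\lambda \in (-1, u) \setminus \{v\}$. -/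
open Set MeasureTheory intervalIntegral

/-!
Differentiating `∫ ξ in x..u, h ξ * √(ξ - x)` at `x = l` under the integral sign gives
`-(1 / 2) * ∫ ξ in l..u, h ξ / √(ξ - l)`, which for `h = g + c` is `-√(u - l) * (c + θ l)`.
Two points make the differentiation legitimate. The square root vanishes on negative numbers, so
the lower limit `x` may be replaced by a fixed number to the left of `l`. And although `√(ξ - x)`
is not Lipschitz in `x` near `l` when `ξ` is close to `l`, its increments from the single point `l`
satisfy `|√(ξ - x) - √(ξ - l)| ≤ |x - l| / √|ξ - l|`, and `|h ξ| / √|ξ - l|` is integrable.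
-/

lemma abs_sqrt_sub_sqrt_mul_sqrt_abs_le (x y : ℝ) : |√x - √y| * √|y| ≤ |x - y| := by
  rcases le_total y 0 with hy | hy
  · rw [Real.sqrt_eq_zero_of_nonpos hy, sub_zero, abs_of_nonneg (Real.sqrt_nonneg x)]
    rcases le_total x 0 with hx | hx
    · rw [Real.sqrt_eq_zero_of_nonpos hx, zero_mul]
      positivity
    · have hamgm := two_mul_le_add_sq (√x) √|y|
      rw [Real.sq_sqrt hx, Real.sq_sqrt (abs_nonneg y), abs_of_nonpos hy] at hamgm
      rw [abs_of_nonpos hy, abs_of_nonneg (by linarith)]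
      linarith
  · rw [abs_of_nonneg hy]
    calc |√x - √y| * √y ≤ |√x - √y| * (√x + √y) := by gcongr; linarith [Real.sqrt_nonneg x]
      _ = |√x ^ 2 - √y ^ 2| := by
        rw [sq_sub_sq, abs_mul, abs_of_nonneg (by positivity : 0 ≤ √x + √y), mul_comm]
      _ = |max x 0 - max y 0| := by
        rw [Real.sq_sqrt', Real.sq_sqrt']
      _ ≤ |x - y| := abs_max_sub_max_le_abs x y 0

lemma sqrt_abs_sub_pos {x y : ℝ} (hxy : x ≠ y) : 0 < √|x - y| :=
  Real.sqrt_pos.2 (abs_pos.2 (sub_ne_zero.2 hxy))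

lemma intervalIntegrable_inv_sqrt_abs (a b : ℝ) :
    IntervalIntegrable (fun x => (√|x|)⁻¹) volume a b := by
  have hbound (x : ℝ) : ‖(√|x|)⁻¹‖ ≤ 1 * ‖x‖ ^ (-(1 / 2) : ℝ) := by
    rw [Real.norm_of_nonneg (by positivity), one_mul, Real.norm_eq_abs, Real.sqrt_eq_rpow,
      Real.rpow_neg (abs_nonneg x)]
  have hloc : LocallyIntegrable (fun x : ℝ => (√|x|)⁻¹) :=
    locallyIntegrable_of_norm_le_rpow (by simp) (by norm_num) (.of_forall hbound)
      (Measurable.aestronglyMeasurable (by fun_prop))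
  exact (hloc.integrableOn_isCompact isCompact_uIcc).intervalIntegrable

lemma intervalIntegrable_div_sqrt_abs_sub {g : ℝ → ℝ} {a b : ℝ}
    (hg : ContinuousOn g (uIcc a b)) (l : ℝ) :
    IntervalIntegrable (fun ξ => g ξ / √|ξ - l|) volume a b := by
  have hinv : IntervalIntegrable (fun ξ => (√|ξ - l|)⁻¹) volume a b := by
    simpa using (intervalIntegrable_inv_sqrt_abs (a - l) (b - l)).comp_sub_right l
  simpa only [div_eq_mul_inv] using hinv.continuousOn_mul hg

lemma intervalIntegrable_div_sqrt_sub {g : ℝ → ℝ} {l u : ℝ} (hlu : l ≤ u)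
    (hg : IntervalIntegrable (fun ξ => g ξ / √|ξ - l|) volume l u) :
    IntervalIntegrable (fun ξ => g ξ / √(ξ - l)) volume l u := by
  refine hg.congr fun ξ hξ => ?_
  rw [uIoc_of_le hlu] at hξ
  simp only [abs_of_pos (sub_pos.2 hξ.1)]

lemma integral_one_div_sqrt_sub {l u : ℝ} (hlu : l ≤ u) :
    ∫ ξ in l..u, 1 / √(ξ - l) = 2 * √(u - l) := by
  have hderiv : ∀ ξ ∈ Ioo l u, HasDerivAt (fun ξ => 2 * √(ξ - l)) (1 / √(ξ - l)) ξ := by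
    intro ξ hξ
    have hsqrt := ((hasDerivAt_id ξ).sub_const l).sqrt (sub_pos.2 hξ.1).ne'
    exact (hsqrt.const_mul 2).congr_deriv (by simp only [id_eq]; ring)
  rw [integral_eq_sub_of_hasDerivAt_of_le hlu (by fun_prop) hderiv
    (intervalIntegrable_div_sqrt_sub hlu (intervalIntegrable_div_sqrt_abs_sub (by fun_prop) l))]
  simp

lemma hasDerivAt_integral_of_dominated_loc_of_lip' {α 𝕜 E : Type*} [MeasurableSpace α]
    {μ : Measure α} [RCLike 𝕜] [NormedAddCommGroup E] [NormedSpace ℝ E] [NormedSpace 𝕜 E]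
    {F : 𝕜 → α → E} {F' : α → E} {bound : α → ℝ} {x₀ : 𝕜} {s : Set 𝕜} (hs : s ∈ nhds x₀)
    (hF_meas : ∀ x ∈ s, AEStronglyMeasurable (F x) μ) (hF_int : Integrable (F x₀) μ)
    (hF'_meas : AEStronglyMeasurable F' μ)
    (h_lip : ∀ᵐ a ∂μ, ∀ x ∈ s, ‖F x a - F x₀ a‖ ≤ bound a * ‖x - x₀‖)
    (bound_integrable : Integrable bound μ)
    (h_diff : ∀ᵐ a ∂μ, HasDerivAt (F · a) (F' a) x₀) :
    HasDerivAt (fun x => ∫ a, F x a ∂μ) (∫ a, F' a ∂μ) x₀ := by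
  obtain ⟨hint, hderiv⟩ := hasFDerivAt_integral_of_dominated_loc_of_lip'
    (F' := fun a => ContinuousLinearMap.toSpanSingleton 𝕜 (F' a)) hs hF_meas hF_int
    ((ContinuousLinearMap.toSpanSingletonCLE (𝕜 := 𝕜)
      (E := E)).continuous.comp_aestronglyMeasurable hF'_meas)
    h_lip bound_integrable (h_diff.mono fun _ h => h.hasFDerivAt)
  refine hderiv.hasDerivAt.congr_deriv ?_
  simp only [ContinuousLinearMap.integral_apply hint, ContinuousLinearMap.toSpanSingleton_apply,
    one_smul]

lemma integral_eq_setIntegral_Ioc_of_forall_le_eq_zero {E : Type*} [NormedAddCommGroup E]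
    [NormedSpace ℝ E] {μ : Measure ℝ} {f : ℝ → E} {a x b : ℝ} (hax : a ≤ x) (hxb : x ≤ b)
    (hf : ∀ ξ ≤ x, f ξ = 0) :
    ∫ ξ in x..b, f ξ ∂μ = ∫ ξ in Ioc a b, f ξ ∂μ := by
  rw [integral_of_le hxb]
  refine (setIntegral_eq_of_subset_of_forall_sdiff_eq_zero measurableSet_Ioc
    (Ioc_subset_Ioc_left hax) fun ξ hξ => hf ξ ?_).symm
  exact not_lt.1 fun hlt => hξ.2 ⟨hlt, hξ.1.2⟩

lemma hasDerivAt_integral_mul_sqrt_sub {μ : Measure ℝ} [NullSingletonClass μ] {h : ℝ → ℝ} {l : ℝ}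
    (hint : Integrable (fun ξ => h ξ * √(ξ - l)) μ)
    (hsing : Integrable (fun ξ => h ξ / √|ξ - l|) μ) :
    HasDerivAt (fun x => ∫ ξ, h ξ * √(ξ - x) ∂μ) (-(1 / 2) * ∫ ξ, h ξ / √(ξ - l) ∂μ) l := by
  have hne : ∀ᵐ ξ ∂μ, ξ ≠ l := Measure.ae_ne μ l
  have hmeas : AEStronglyMeasurable h μ := by
    have hsqrt : AEStronglyMeasurable (fun ξ => √|ξ - l|) μ := by fun_prop
    refine (hsing.aestronglyMeasurable.mul hsqrt).congr ?_
    filter_upwards [hne] with ξ hξ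
    exact div_mul_cancel₀ _ (sqrt_abs_sub_pos hξ).ne'
  rw [← MeasureTheory.integral_const_mul]
  refine hasDerivAt_integral_of_dominated_loc_of_lip' (bound := fun ξ => ‖h ξ / √|ξ - l|‖)
    Filter.univ_mem (fun x _ => hmeas.mul (by fun_prop)) hint ?_ ?_ hsing.norm ?_
  · exact (hmeas.div₀ (by fun_prop)).const_mul _
  · filter_upwards [hne] with ξ hξ x _
    have hpos : 0 < √|ξ - l| := sqrt_abs_sub_pos hξ
    have hsqrt : |√(ξ - x) - √(ξ - l)| ≤ |x - l| / √|ξ - l| := by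
      rw [le_div_iff₀ hpos]
      simpa [abs_sub_comm] using abs_sqrt_sub_sqrt_mul_sqrt_abs_le (ξ - x) (ξ - l)
    calc ‖h ξ * √(ξ - x) - h ξ * √(ξ - l)‖ = |h ξ| * |√(ξ - x) - √(ξ - l)| := by
          rw [← mul_sub, Real.norm_eq_abs, abs_mul]
      _ ≤ |h ξ| * (|x - l| / √|ξ - l|) := by gcongr
      _ = ‖h ξ / √|ξ - l|‖ * ‖x - l‖ := by
          rw [norm_div, Real.norm_of_nonneg hpos.le, Real.norm_eq_abs, Real.norm_eq_abs]
          ring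
  · filter_upwards [hne] with ξ hξ
    have hsqrt := ((hasDerivAt_id l).const_sub ξ).sqrt (sub_ne_zero.2 hξ)
    exact (hsqrt.const_mul (h ξ)).congr_deriv (by simp only [id_eq]; ring)

lemma hasDerivAt_intervalIntegral_mul_sqrt_sub {h : ℝ → ℝ} {a l u : ℝ} (hl : l ∈ Ioo a u)
    (hsing : IntervalIntegrable (fun ξ => h ξ / √|ξ - l|) volume a u) :
    HasDerivAt (fun x => ∫ ξ in x..u, h ξ * √(ξ - x))
      (-(1 / 2) * ∫ ξ in l..u, h ξ / √(ξ - l)) l := by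
  have hau : a ≤ u := (hl.1.trans hl.2).le
  have hint : IntervalIntegrable (fun ξ => h ξ * √(ξ - l)) volume a u := by
    have hcont : ContinuousOn (fun ξ => √|ξ - l| * √(ξ - l)) (uIcc a u) := by fun_prop
    refine (hsing.mul_continuousOn hcont).congr fun ξ _ => ?_
    rcases le_or_gt ξ l with hξ | hξ
    · simp only [Real.sqrt_eq_zero_of_nonpos (sub_nonpos.2 hξ), mul_zero]
    · simp only [← mul_assoc, div_mul_cancel₀ _ (sqrt_abs_sub_pos hξ.ne').ne']
  have hderiv := hasDerivAt_integral_mul_sqrt_sub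
    ((intervalIntegrable_iff_integrableOn_Ioc_of_le hau).1 hint)
    ((intervalIntegrable_iff_integrableOn_Ioc_of_le hau).1 hsing)
  rw [← integral_eq_setIntegral_Ioc_of_forall_le_eq_zero hl.1.le hl.2.le fun ξ hξ => by
    rw [Real.sqrt_eq_zero_of_nonpos (sub_nonpos.2 hξ), div_zero]] at hderiv
  refine hderiv.congr_of_eventuallyEq ?_
  filter_upwards [Ioo_mem_nhds hl.1 hl.2] with x hx
  exact integral_eq_setIntegral_Ioc_of_forall_le_eq_zero hx.1.le hx.2.le fun ξ hξ => by
    rw [Real.sqrt_eq_zero_of_nonpos (sub_nonpos.2 hξ), mul_zero]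

lemma integral_add_const_div_sqrt_sub {g : ℝ → ℝ} {l u : ℝ} (c : ℝ) (hlu : l < u)
    (hg : IntervalIntegrable (fun ξ => g ξ / √(ξ - l)) volume l u) :
    ∫ ξ in l..u, (g ξ + c) / √(ξ - l) =
      2 * √(u - l) * (c + 1 / (2 * √(u - l)) * ∫ ξ in l..u, g ξ / √(ξ - l)) := by
  have hone : IntervalIntegrable (fun ξ => 1 / √(ξ - l)) volume l u :=
    intervalIntegrable_div_sqrt_sub hlu.le (intervalIntegrable_div_sqrt_abs_sub (by fun_prop) l)
  have hpos : 0 < √(u - l) := Real.sqrt_pos.2 (sub_pos.2 hlu)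
  calc ∫ ξ in l..u, (g ξ + c) / √(ξ - l)
      = ∫ ξ in l..u, (g ξ / √(ξ - l) + c * (1 / √(ξ - l))) := by
        simp only [add_div, mul_one_div]
    _ = (∫ ξ in l..u, g ξ / √(ξ - l)) + c * (2 * √(u - l)) := by
        rw [intervalIntegral.integral_add hg (hone.const_mul c),
          intervalIntegral.integral_const_mul, integral_one_div_sqrt_sub hlu.le]
    _ = _ := by
        field_simp
        ring

lemma hasDerivAt_integral_add_const_mul_sqrt_sub {g : ℝ → ℝ} {a l u : ℝ} (c : ℝ)
    (hl : l ∈ Ioo a u) (hg : IntervalIntegrable (fun ξ => g ξ / √|ξ - l|) volume a u) :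
    HasDerivAt (fun x => ∫ ξ in x..u, (g ξ + c) * √(ξ - x))
      (-√(u - l) * (c + 1 / (2 * √(u - l)) * ∫ ξ in l..u, g ξ / √(ξ - l))) l := by
  have hsing : IntervalIntegrable (fun ξ => (g ξ + c) / √|ξ - l|) volume a u := by
    simpa only [add_div] using
      hg.add (intervalIntegrable_div_sqrt_abs_sub (g := fun _ => c) continuousOn_const l)
  have hglu : IntervalIntegrable (fun ξ => g ξ / √(ξ - l)) volume l u :=
    intervalIntegrable_div_sqrt_sub hl.2.le
      (hg.mono_set (uIcc_subset_uIcc_right (Icc_subset_uIcc ⟨hl.1.le, hl.2.le⟩)))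
  refine (hasDerivAt_intervalIntegral_mul_sqrt_sub hl hsing).congr_deriv ?_
  rw [integral_add_const_div_sqrt_sub c hl.2 hglu]
  ring

theorem stmt0_general {a u c : ℝ} {s : Set ℝ} {g θ φ : ℝ → ℝ}
    (hg : ∀ l ∈ Ioo a u, ∀ b ∈ Ioo a l,
      IntervalIntegrable (fun ξ => g ξ / √|ξ - l|) volume b u)
    (hθ : ∀ l ∈ Ioo a u, θ l = 1 / (2 * √(u - l)) * ∫ ξ in l..u, g ξ / √(ξ - l))
    (hφ : ∀ l ∈ Ioo a u, φ l = ∫ ξ in l..u, (g ξ + c) * √(ξ - l))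
    (hneg : ∀ l ∈ Ioo a u, l ∉ s → c + θ l < 0) :
    ∃ φ' : ℝ → ℝ, (∀ l ∈ Ioo a u, HasDerivAt φ (φ' l) l) ∧
      ∀ l ∈ Ioo a u, l ∉ s → 0 < φ' l := by
  refine ⟨fun l => -√(u - l) * (c + θ l), fun l hl => ?_, fun l hl hls => ?_⟩
  · obtain ⟨b, hab, hbl⟩ := exists_between hl.1
    beta_reduce
    rw [hθ l hl]
    refine (hasDerivAt_integral_add_const_mul_sqrt_sub c ⟨hbl, hl.2⟩
      (hg l hl b ⟨hab, hbl⟩)).congr_of_eventuallyEq ?_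
    filter_upwards [Ioo_mem_nhds hl.1 hl.2] with x hx using hφ x hx
  · have hsqrt : 0 < √(u - l) := Real.sqrt_pos.2 (sub_pos.2 hl.2)
    exact mul_pos_of_neg_of_neg (neg_neg_of_pos hsqrt) (hneg l hl hls)

/-- First inequality of Proposition 3.1: under the condition `6t + θ(λ) < 0` on
`[-1, u) \ {v}`, the phase `φ` is differentiable on `(-1, u)` with positive derivative
away from `v`. -/
theorem stmt0 (u v t : ℝ) (hv : -1 < v) (hvu : v < u) (hu : u < 0) (ht : 0 < t)
    (g : ℝ → ℝ) (hg : ContinuousOn g (Set.Ioc (-1) u))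
    (θ φ : ℝ → ℝ)
    (hθ : ∀ l ∈ Set.Ioo (-1 : ℝ) u,
      θ l = (1 / (2 * Real.sqrt (u - l))) * ∫ ξ in l..u, g ξ / Real.sqrt (ξ - l))
    (hφ : ∀ l ∈ Set.Ioo (-1 : ℝ) u,
      φ l = ∫ ξ in l..u, (g ξ + 6 * t) * Real.sqrt (ξ - l))
    (hneg : ∀ l ∈ Set.Ico (-1 : ℝ) u, l ≠ v → 6 * t + θ l < 0) :
    ∃ φ' : ℝ → ℝ, (∀ l ∈ Set.Ioo (-1 : ℝ) u, HasDerivAt φ (φ' l) l) ∧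
      ∀ l ∈ Set.Ioo (-1 : ℝ) u, l ≠ v → 0 < φ' l := by
  exact stmt0_general (s := {v})
    (fun l hl b hb => intervalIntegrable_div_sqrt_abs_sub
      (hg.mono (ordConnected_Ioc.uIcc_subset ⟨hb.1, (hb.2.trans hl.2).le⟩
        (right_mem_Ioc.2 (hv.trans hvu)))) l)
    hθ hφ fun l hl => hneg l (Ioo_subset_Ico_self hl)
end

section
/- Let $-1 < u < 0$ be real, let $t > 0$, and let $g : [u, 0] \to \mathbb{R}$ be continuous. Define $X(\lambda) = \int_u^\lambda (g(\xi) + 6t)\sqrt{\lambda - \xi}\,d\xi$ for $\lambda \in [u, 0]$. If $\int_u^\mu \frac{g(\xi) + 6t}{\sqrt{\mu - \xi}}\,d\xi < 0$ for every $\mu \in (u, 0]$, then $X(\lambda) < 0$ for every $\lambda \in (u, 0]$. -/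
open Set MeasureTheory intervalIntegral

/-!
Write `h ξ = g ξ + 6t`. Since `√z` is half the integral of `1 / √s` over `0 < s < z`, exchanging
the order of integration over the triangle `a < ξ < μ < b` gives
`∫ μ in a..b, ∫ ξ in a..μ, h ξ / √(μ - ξ) = 2 * ∫ ξ in a..b, h ξ * √(b - ξ)`,
so a negative Abel transform of `h` forces the integral on the right to be negative.
-/

section Triangle

variable {M E : Type*} [Zero M] [NormedAddCommGroup E] [NormedSpace ℝ E] {a b : ℝ}
  {F : ℝ → ℝ → E}

/-- The triangle above the diagonal of the square `(a, b]²`, over which the order of integration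
is exchanged. The sides `x = y` and `y = b` are included and `x = a` is not, so that all its
sections are intervals `Ioc` or `Icc`. -/
def upperTriangle (a b : ℝ) : Set (ℝ × ℝ) :=
  {p | a < p.1 ∧ p.1 ≤ p.2 ∧ p.2 ≤ b}

theorem measurableSet_upperTriangle : MeasurableSet (upperTriangle a b) :=
  (measurableSet_lt measurable_const measurable_fst).inter
    ((measurableSet_le measurable_fst measurable_snd).inter
      (measurableSet_le measurable_snd measurable_const))

theorem indicator_upperTriangle_left (F : ℝ → ℝ → M) (x y : ℝ) :
    (upperTriangle a b).indicator F.uncurry (x, y) =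
      (Ioc a b).indicator (fun x => (Icc x b).indicator (F x) y) x := by
  simp only [indicator_apply, upperTriangle, mem_ofPred_eq, mem_Ioc, mem_Icc,
    Function.uncurry_apply_pair]
  grind

theorem indicator_upperTriangle_right (F : ℝ → ℝ → M) (x y : ℝ) :
    (upperTriangle a b).indicator F.uncurry (x, y) =
      (Ioc a b).indicator (fun y => (Ioc a y).indicator (F · y) x) y := by
  simp only [indicator_apply, upperTriangle, mem_ofPred_eq, mem_Ioc, Function.uncurry_apply_pair]
  grind

theorem integral_indicator_upperTriangle_left (F : ℝ → ℝ → E) (x : ℝ) :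
    ∫ y, (upperTriangle a b).indicator F.uncurry (x, y) =
      (Ioc a b).indicator (fun x => ∫ y in x..b, F x y) x := by
  simp only [indicator_upperTriangle_left]
  by_cases hx : x ∈ Ioc a b
  · simp only [indicator_of_mem hx, integral_of_le hx.2]
    rw [MeasureTheory.integral_indicator measurableSet_Icc, integral_Icc_eq_integral_Ioc]
  · simp only [indicator_of_notMem hx, MeasureTheory.integral_zero]

theorem integral_indicator_upperTriangle_right (F : ℝ → ℝ → E) (y : ℝ) :
    ∫ x, (upperTriangle a b).indicator F.uncurry (x, y) =
      (Ioc a b).indicator (fun y => ∫ x in a..y, F x y) y := by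
  simp only [indicator_upperTriangle_right]
  by_cases hy : y ∈ Ioc a b
  · simp only [indicator_of_mem hy, integral_of_le hy.1.le]
    rw [MeasureTheory.integral_indicator measurableSet_Ioc]
  · simp only [indicator_of_notMem hy, MeasureTheory.integral_zero]

theorem intervalIntegrable_integral_of_integrableOn_upperTriangle (hab : a ≤ b)
    (hF : IntegrableOn F.uncurry (upperTriangle a b)) :
    IntervalIntegrable (fun y => ∫ x in a..y, F x y) volume a b := by
  rw [intervalIntegrable_iff_integrableOn_Ioc_of_le hab,
    ← integrable_indicator_iff measurableSet_Ioc]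
  have hint := (hF.integrable_indicator measurableSet_upperTriangle).integral_prod_right
  simpa only [integral_indicator_upperTriangle_right] using hint

theorem integral_integral_swap_upperTriangle (hab : a ≤ b)
    (hF : IntegrableOn F.uncurry (upperTriangle a b)) :
    ∫ y in a..b, ∫ x in a..y, F x y = ∫ x in a..b, ∫ y in x..b, F x y := by
  have hswap := integral_integral_swap
    (f := fun x y => (upperTriangle a b).indicator F.uncurry (x, y))
    (hF.integrable_indicator measurableSet_upperTriangle)
  simp only [integral_indicator_upperTriangle_left, integral_indicator_upperTriangle_right,
    MeasureTheory.integral_indicator measurableSet_Ioc] at hswap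
  simpa only [integral_of_le hab] using hswap.symm

end Triangle

section Volterra

variable {E E' F : Type*} [NormedAddCommGroup E] [NormedSpace ℝ E]
  [NormedAddCommGroup E'] [NormedSpace ℝ E'] [NormedAddCommGroup F] [NormedSpace ℝ F]
  {a b : ℝ} {h : ℝ → E} {k : ℝ → E'}

theorem integrableOn_upperTriangle_convolution (L : E →L[ℝ] E' →L[ℝ] F) (hab : a ≤ b)
    (hh : IntervalIntegrable h volume a b) (hk : IntervalIntegrable k volume 0 (b - a)) :
    IntegrableOn (fun x y => L (h x) (k (y - x))).uncurry (upperTriangle a b) := by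
  rw [intervalIntegrable_iff_integrableOn_Ioc_of_le hab] at hh
  rw [intervalIntegrable_iff_integrableOn_Icc_of_le (sub_nonneg.2 hab)] at hk
  have hconv := ((hh.integrable_indicator measurableSet_Ioc).convolution_integrand L
    (hk.integrable_indicator measurableSet_Icc)).swap
  refine hconv.integrableOn.congr_fun (fun ⟨x, y⟩ ⟨hax, hxy, hyb⟩ => ?_)
    measurableSet_upperTriangle
  have hx : x ∈ Ioc a b := ⟨hax, hxy.trans hyb⟩
  have hyx : y - x ∈ Icc 0 (b - a) := ⟨sub_nonneg.2 hxy, by linarith⟩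
  simp [hx, indicator_of_mem hyx]

theorem integral_integral_convolution [CompleteSpace E'] [CompleteSpace F]
    (L : E →L[ℝ] E' →L[ℝ] F) (hab : a ≤ b) (hh : IntervalIntegrable h volume a b)
    (hk : IntervalIntegrable k volume 0 (b - a)) :
    ∫ y in a..b, ∫ x in a..y, L (h x) (k (y - x)) =
      ∫ x in a..b, L (h x) (∫ z in 0..b - x, k z) := by
  rw [integral_integral_swap_upperTriangle hab
    (integrableOn_upperTriangle_convolution L hab hh hk)]
  refine integral_congr fun x hx => ?_
  rw [uIcc_of_le hab] at hx
  have hkx : IntervalIntegrable k volume 0 (b - x) :=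
    hk.mono_set (uIcc_subset_uIcc_left
      (mem_uIcc_of_le (sub_nonneg.2 hx.2) (sub_le_sub_left hx.1 b)))
  rw [← (L (h x)).intervalIntegral_comp_comm hkx,
    integral_comp_sub_right (fun z => L (h x) (k z)), sub_self]

end Volterra

theorem integral_mul_primitive_neg {a b : ℝ} {h k : ℝ → ℝ} (hab : a < b)
    (hh : IntervalIntegrable h volume a b) (hk : IntervalIntegrable k volume 0 (b - a))
    (hneg : ∀ y ∈ Ioo a b, ∫ x in a..y, h x * k (y - x) < 0) :
    ∫ x in a..b, h x * ∫ z in 0..b - x, k z < 0 := by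
  let L := ContinuousLinearMap.mul ℝ ℝ
  have hint : IntervalIntegrable (fun y => ∫ x in a..y, h x * k (y - x)) volume a b :=
    intervalIntegrable_integral_of_integrableOn_upperTriangle hab.le
      (integrableOn_upperTriangle_convolution L hab.le hh hk)
  have hpos : 0 < ∫ y in a..b, -∫ x in a..y, h x * k (y - x) :=
    intervalIntegral_pos_of_pos_on hint.neg (fun y hy => neg_pos.2 (hneg y hy)) hab
  calc ∫ x in a..b, h x * ∫ z in 0..b - x, k z
      = ∫ y in a..b, ∫ x in a..y, h x * k (y - x) :=
        (integral_integral_convolution L hab.le hh hk).symm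
    _ < 0 := by rwa [intervalIntegral.integral_neg, neg_pos] at hpos

theorem inv_sqrt_eq_rpow {x : ℝ} (hx : 0 ≤ x) : (√x)⁻¹ = x ^ (-(1 / 2) : ℝ) := by
  rw [Real.rpow_neg hx, Real.sqrt_eq_rpow]

theorem intervalIntegrable_inv_sqrt {c : ℝ} (hc : 0 ≤ c) :
    IntervalIntegrable (fun z => (√z)⁻¹) volume 0 c := by
  refine (intervalIntegrable_rpow' (r := -(1 / 2)) (by norm_num)).congr fun z hz => ?_
  rw [uIoc_of_le hc] at hz
  exact (inv_sqrt_eq_rpow hz.1.le).symm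

theorem integral_inv_sqrt {c : ℝ} (hc : 0 ≤ c) : ∫ z in 0..c, (√z)⁻¹ = 2 * √c := by
  calc ∫ z in 0..c, (√z)⁻¹ = ∫ z in 0..c, z ^ (-(1 / 2) : ℝ) := by
        refine integral_congr fun z hz => inv_sqrt_eq_rpow ?_
        exact (uIcc_of_le hc ▸ hz).1
    _ = 2 * √c := by
        rw [integral_rpow (Or.inl (by norm_num)), Real.sqrt_eq_rpow]
        norm_num [div_eq_mul_inv, mul_comm]

theorem integral_mul_sqrt_sub_neg {a b : ℝ} {h : ℝ → ℝ} (hab : a < b)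
    (hh : IntervalIntegrable h volume a b)
    (hneg : ∀ μ ∈ Ioo a b, ∫ ξ in a..μ, h ξ / √(μ - ξ) < 0) :
    ∫ ξ in a..b, h ξ * √(b - ξ) < 0 := by
  have hprim : ∫ ξ in a..b, h ξ * ∫ z in 0..b - ξ, (√z)⁻¹ < 0 :=
    integral_mul_primitive_neg hab hh (intervalIntegrable_inv_sqrt (sub_nonneg.2 hab.le)) hneg
  have heq : ∫ ξ in a..b, h ξ * ∫ z in 0..b - ξ, (√z)⁻¹ = 2 * ∫ ξ in a..b, h ξ * √(b - ξ) := by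
    rw [← intervalIntegral.integral_const_mul]
    refine integral_congr fun ξ hξ => ?_
    rw [uIcc_of_le hab.le] at hξ
    simp only [integral_inv_sqrt (sub_nonneg.2 hξ.2), mul_left_comm]
  linarith

theorem stmt1_general {a b : ℝ} {h : ℝ → ℝ} (hh : IntervalIntegrable h volume a b)
    (hneg : ∀ μ ∈ Ioc a b, ∫ ξ in a..μ, h ξ / √(μ - ξ) < 0) :
    ∀ l ∈ Ioc a b, ∫ ξ in a..l, h ξ * √(l - ξ) < 0 := fun _ hl =>
  integral_mul_sqrt_sub_neg hl.1
    (hh.mono_set (uIcc_subset_uIcc_left (mem_uIcc_of_le hl.1.le hl.2)))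
    fun μ hμ => hneg μ ⟨hμ.1, hμ.2.le.trans hl.2⟩

/-- Real form of the second inequality of Proposition 3.1: if the Abel-type averaged
integral of `g + 6t` is negative on `(u, 0]`, then `X(λ) = ∫_u^λ (g(ξ)+6t)√(λ-ξ) dξ`
is negative on `(u, 0]`. -/
theorem stmt1 (u t : ℝ) (hu1 : -1 < u) (hu0 : u < 0) (ht : 0 < t)
    (g : ℝ → ℝ) (hg : ContinuousOn g (Set.Icc u 0))
    (X : ℝ → ℝ)
    (hX : ∀ l ∈ Set.Icc u (0 : ℝ), X l = ∫ ξ in u..l, (g ξ + 6 * t) * Real.sqrt (l - ξ))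
    (hneg : ∀ μ ∈ Set.Ioc u (0 : ℝ),
      (∫ ξ in u..μ, (g ξ + 6 * t) / Real.sqrt (μ - ξ)) < 0) :
    ∀ l ∈ Set.Ioc u (0 : ℝ), X l < 0 := by
  exact fun l hl => (hX l (Ioc_subset_Icc_self hl)).trans_lt <|
    stmt1_general ((hg.add continuousOn_const).intervalIntegrable_of_Icc hu0.le) hneg l hl
end

section
/- Let $u < 0$ and let $h : (u, 0) \to \mathbb{R}$ be measurable with $\eta \mapsto h(\eta)/\sqrt{\eta - u}$ integrable on $(u, 0)$. Define $G(\lambda) = \frac{(u - \lambda)^{1/2}}{\pi} \int_u^0 \frac{h(\eta)}{\sqrt{\eta - u}\,(\eta - \lambda)}\,d\eta$ for $\lambda \in \mathbb{C} \setminus [u, \infty)$. Then for every $\lambda_0 > 0$, the boundary values $G_+(\lambda_0) = \lim_{\delta \to 0^+} G(\lambda_0 + i\delta)$ and $G_-(\lambda_0) = \lim_{\delta \to 0^+} G(\lambda_0 - i\delta)$ exist and satisfy $G_+(\lambda_0) + G_-(\lambda_0) = 0$. -/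
open Set MeasureTheory intervalIntegral Complex Filter

/-!
To the right of the interval of integration the Cauchy integral is continuous across the real axis,
so the jump of `G` is entirely that of `(u - λ) ^ (1/2)`. There `u - λ` crosses the branch cut of
the power function, where the boundary values of `w ^ a` differ by the factor `exp (-2πia)`,
which is `-1` for `a = 1/2`.
-/

open scoped Topology

section CauchyIntegral

variable {X 𝕜 E : Type*} [MeasurableSpace X] {μ : Measure X} [RCLike 𝕜]
  [NormedAddCommGroup E] [NormedSpace ℝ E] [NormedSpace 𝕜 E]

lemma continuousAt_integral_inv_sub_smul {φ : X → 𝕜} {f : X → E} {z : 𝕜} {r : ℝ}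
    (hφ : AEMeasurable φ μ) (hf : Integrable f μ) (hr : 0 < r)
    (hdist : ∀ᵐ x ∂μ, r ≤ ‖φ x - z‖) :
    ContinuousAt (fun w => ∫ x, (φ x - w)⁻¹ • f x ∂μ) z := by
  refine continuousAt_of_dominated (bound := fun x => (r / 2)⁻¹ * ‖f x‖) ?_ ?_
    (hf.norm.const_mul _) ?_
  · exact .of_forall fun w => (hφ.sub_const w).inv.aestronglyMeasurable.smul hf.1
  · filter_upwards [Metric.ball_mem_nhds z (half_pos hr)] with w hw
    filter_upwards [hdist] with x hx
    have hlower : r / 2 ≤ ‖φ x - w‖ := by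
      have htriangle := norm_sub_le_norm_sub_add_norm_sub (φ x) w z
      rw [mem_ball_iff_norm] at hw
      linarith
    rw [norm_smul, norm_inv]
    gcongr
  · filter_upwards [hdist] with x hx
    have hne : φ x - z ≠ 0 := norm_pos_iff.1 (hr.trans_le hx)
    exact ((continuousAt_const.sub continuousAt_id).inv₀ hne).smul continuousAt_const

end CauchyIntegral

lemma continuousAt_intervalIntegral_div_sub {a b : ℝ} (hab : a ≤ b) {f : ℝ → ℂ}
    (hf : IntervalIntegrable f volume a b) {z : ℂ} (hz : b < z.re) :
    ContinuousAt (fun w : ℂ => ∫ η in a..b, f η / ((η : ℂ) - w)) z := by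
  have hdist : ∀ᵐ η ∂volume.restrict (Ioc a b), z.re - b ≤ ‖((η : ℝ) : ℂ) - z‖ := by
    filter_upwards [ae_restrict_mem measurableSet_Ioc] with η hη
    calc z.re - b ≤ -((η : ℂ) - z).re := by rw [sub_re, ofReal_re]; linarith [hη.2]
      _ ≤ ‖(η : ℂ) - z‖ := (neg_le_abs _).trans (abs_re_le_norm _)
  simpa only [integral_of_le hab, smul_eq_mul, inv_mul_eq_div] using
    continuousAt_integral_inv_sub_smul measurable_ofReal.aemeasurable hf.1 (sub_pos.2 hz) hdist

section BranchCut

variable {z : ℂ}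

lemma continuousWithinAt_cpow_const_of_re_neg_of_im_zero (hre : z.re < 0) (him : z.im = 0)
    (a : ℂ) : ContinuousWithinAt (fun w : ℂ => w ^ a) {w | 0 ≤ w.im} z := by
  have hz : z ≠ 0 := fun h0 => hre.ne (congrArg re h0)
  have hexp := ((continuousWithinAt_log_of_re_neg_of_im_zero hre him).mul_const a).cexp
  refine hexp.congr_of_eventuallyEq ?_ (cpow_def_of_ne_zero hz a)
  filter_upwards [nhdsWithin_le_nhds (isOpen_ne.mem_nhds hz)] with w hw
  exact cpow_def_of_ne_zero hw a

lemma tendsto_cpow_const_nhdsWithin_im_neg_of_re_neg_of_im_zero (hre : z.re < 0)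
    (him : z.im = 0) (a : ℂ) :
    Tendsto (fun w : ℂ => w ^ a) (𝓝[{w | w.im < 0}] z)
      (𝓝 (exp (-(2 * Real.pi * I * a)) * z ^ a)) := by
  have hz : z ≠ 0 := fun h0 => hre.ne (congrArg re h0)
  have hlog : log z = Real.log ‖z‖ + Real.pi * I := by
    rw [log, arg_eq_pi_iff.2 ⟨hre, him⟩]
  have hvalue : exp (-(2 * Real.pi * I * a)) * z ^ a
      = exp ((Real.log ‖z‖ - Real.pi * I) * a) := by
    rw [cpow_def_of_ne_zero hz, hlog, ← exp_add]
    ring_nf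
  rw [hvalue]
  have hexp := ((tendsto_log_nhdsWithin_im_neg_of_re_neg_of_im_zero hre him).mul_const a).cexp
  refine hexp.congr' ?_
  filter_upwards [nhdsWithin_le_nhds (isOpen_ne.mem_nhds hz)] with w hw
  exact (cpow_def_of_ne_zero hw a).symm

end BranchCut

section SquareRoot

variable {u x : ℝ}

lemma tendsto_sub_cpow_half_nhdsWithin_im_pos (hux : u < x) :
    Tendsto (fun l : ℂ => ((u : ℂ) - l) ^ ((1 : ℂ) / 2)) (𝓝[{l | 0 < l.im}] (x : ℂ))
      (𝓝 (-((u : ℂ) - x) ^ ((1 : ℂ) / 2))) := by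
  have hfactor : exp (-(2 * Real.pi * I * (1 / 2))) = -1 := by
    rw [show 2 * Real.pi * I * (1 / 2) = Real.pi * I by ring, exp_neg, exp_pi_mul_I, inv_neg_one]
  have hsub : Tendsto (fun l : ℂ => (u : ℂ) - l) (𝓝[{l | 0 < l.im}] (x : ℂ))
      (𝓝[{w | w.im < 0}] ((u : ℂ) - x)) :=
    (by fun_prop : Continuous fun l : ℂ => (u : ℂ) - l).continuousWithinAt.tendsto_nhdsWithin
      fun l hl => by simpa using hl
  have hpow := tendsto_cpow_const_nhdsWithin_im_neg_of_re_neg_of_im_zero (z := (u : ℂ) - x)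
    (by simpa using hux) (by simp) (1 / 2)
  rw [hfactor, neg_one_mul] at hpow
  exact hpow.comp hsub

lemma tendsto_sub_cpow_half_nhdsWithin_im_neg (hux : u < x) :
    Tendsto (fun l : ℂ => ((u : ℂ) - l) ^ ((1 : ℂ) / 2)) (𝓝[{l | l.im < 0}] (x : ℂ))
      (𝓝 (((u : ℂ) - x) ^ ((1 : ℂ) / 2))) := by
  have hsub : Tendsto (fun l : ℂ => (u : ℂ) - l) (𝓝[{l | l.im < 0}] (x : ℂ))
      (𝓝[{w | 0 ≤ w.im}] ((u : ℂ) - x)) :=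
    (by fun_prop : Continuous fun l : ℂ => (u : ℂ) - l).continuousWithinAt.tendsto_nhdsWithin
      fun l (hl : l.im < 0) => by simpa using hl.le
  exact (continuousWithinAt_cpow_const_of_re_neg_of_im_zero (by simpa using hux) (by simp)
    _).tendsto.comp hsub

end SquareRoot

lemma tendsto_add_mul_I_nhdsWithin_im_pos (x : ℝ) :
    Tendsto (fun δ : ℝ => (x : ℂ) + δ * I) (𝓝[>] 0) (𝓝[{l | 0 < l.im}] (x : ℂ)) :=
  tendsto_nhdsWithin_iff.2
    ⟨(Continuous.tendsto' (by fun_prop) _ _ (by simp)).mono_left nhdsWithin_le_nhds, by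
      filter_upwards [self_mem_nhdsWithin] with δ hδ
      simpa using hδ⟩

lemma tendsto_sub_mul_I_nhdsWithin_im_neg (x : ℝ) :
    Tendsto (fun δ : ℝ => (x : ℂ) - δ * I) (𝓝[>] 0) (𝓝[{l | l.im < 0}] (x : ℂ)) :=
  tendsto_nhdsWithin_iff.2
    ⟨(Continuous.tendsto' (by fun_prop) _ _ (by simp)).mono_left nhdsWithin_le_nhds, by
      filter_upwards [self_mem_nhdsWithin] with δ hδ
      simpa using hδ⟩

/-- The `G`-function with density `h` on `[u, b]`; the paper's has `b = 0`. The square root is the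
principal power, so on the cut, where the paper leaves `G` undefined, the root takes its limit
from the lower half-plane. -/
noncomputable def gFunction (u b : ℝ) (h : ℝ → ℂ) (l : ℂ) : ℂ :=
  (((u : ℂ) - l) ^ ((1 : ℂ) / 2)) / (Real.pi : ℂ) *
    ∫ η in u..b, h η / ((Real.sqrt (η - u) : ℂ) * ((η : ℂ) - l))

theorem stmt9_general {u b : ℝ} (hub : u ≤ b) {h : ℝ → ℂ}
    (hint : IntervalIntegrable (fun η => h η / (Real.sqrt (η - u) : ℂ)) volume u b)
    {l₀ : ℝ} (hl₀ : b < l₀) :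
    Tendsto (gFunction u b h) (𝓝[{l | 0 < l.im}] (l₀ : ℂ)) (𝓝 (-gFunction u b h l₀)) ∧
      Tendsto (gFunction u b h) (𝓝[{l | l.im < 0}] (l₀ : ℂ)) (𝓝 (gFunction u b h l₀)) := by
  have hul₀ : u < l₀ := hub.trans_lt hl₀
  have hcauchy := continuousAt_intervalIntegral_div_sub hub hint (z := l₀) (by simpa using hl₀)
  simp only [div_div] at hcauchy
  constructor
  · have hlim := ((tendsto_sub_cpow_half_nhdsWithin_im_pos hul₀).div_const (Real.pi : ℂ)).mul
      (hcauchy.tendsto.mono_left nhdsWithin_le_nhds)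
    rwa [neg_div, neg_mul] at hlim
  · exact ((tendsto_sub_cpow_half_nhdsWithin_im_neg hul₀).div_const _).mul
      (hcauchy.tendsto.mono_left nhdsWithin_le_nhds)

/-- Jump relation (3.7) of the `G`-function on the positive half-line:
the boundary values `G_±(λ₀)` exist for `λ₀ > 0` and satisfy `G_+(λ₀) + G_-(λ₀) = 0`. -/
theorem stmt9 (u : ℝ) (hu : u < 0) (h : ℝ → ℝ) (hmeas : Measurable h)
    (hint : IntervalIntegrable (fun η => h η / Real.sqrt (η - u)) volume u 0)
    (G : ℂ → ℂ)
    (hG : ∀ l : ℂ, G l = (((u : ℂ) - l) ^ ((1 : ℂ) / 2)) / (Real.pi : ℂ) *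
        ∫ η in u..(0 : ℝ), (h η : ℂ) / ((Real.sqrt (η - u) : ℂ) * ((η : ℂ) - l))) :
    ∀ l₀ : ℝ, 0 < l₀ →
      ∃ Gp Gm : ℂ,
        Tendsto (fun δ : ℝ => G ((l₀ : ℂ) + δ * Complex.I))
          (nhdsWithin 0 (Set.Ioi 0)) (nhds Gp) ∧
        Tendsto (fun δ : ℝ => G ((l₀ : ℂ) - δ * Complex.I))
          (nhdsWithin 0 (Set.Ioi 0)) (nhds Gm) ∧
        Gp + Gm = 0 := by
  intro l₀ hl₀
  obtain rfl : G = gFunction u 0 fun η => (h η : ℂ) := funext hG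
  have hint' : IntervalIntegrable (fun η => ((h η / Real.sqrt (η - u) : ℝ) : ℂ)) volume u 0 :=
    ⟨hint.1.ofReal, hint.2.ofReal⟩
  obtain ⟨hupper, hlower⟩ := stmt9_general hu.le (by simpa only [ofReal_div] using hint') hl₀
  exact ⟨_, _, hupper.comp (tendsto_add_mul_I_nhdsWithin_im_pos l₀),
    hlower.comp (tendsto_sub_mul_I_nhdsWithin_im_neg l₀), neg_add_cancel _⟩
end

section
/- Let $u < 0$ and let $h : [u, 0] \to \mathbb{R}$ be H\"older continuous with some exponent $\beta \in (0, 1]$. Define $G(\lambda) = \frac{(u - \lambda)^{1/2}}{\pi} \int_u^0 \frac{h(\eta)}{\sqrt{\eta - u}\,(\eta - \lambda)}\,d\eta$ for $\lambda \in \mathbb{C} \setminus [u, \infty)$. Then for every $\lambda_0 \in (u, 0)$, the boundary values $G_+(\lambda_0) = \lim_{\delta \to 0^+} G(\lambda_0 + i\delta)$ and $G_-(\lambda_0) = \lim_{\delta \to 0^+} G(\lambda_0 - i\delta)$ exist and satisfy $G_+(\lambda_0) + G_-(\lambda_0) = 2 h(\lambda_0)$. -/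
open Set MeasureTheory intervalIntegral Complex Filter
open scoped Topology

/-!
Write `f(t) = h(t) / √(t - a)` and split
`f(t) / (t - z) = (t - x) / (t - z) · slope f x t + f(x) / (t - z)`.
On the vertical line through `x` the factor `(t - x) / (t - z)` has modulus at most `1`, so
dominated convergence applies as soon as the difference quotient is integrable, a Dini-type
condition that Hölder continuity implies. The second term integrates to
`(log (b - z) - log (a - z)) f(x)`. As `z → x` from above or below, `log (a - z)` tends to
`log (x - a) ∓ πi`, hence `(a - z)^{1/2} = exp (log (a - z) / 2)` tends to `∓ i √(x - a)`.
In `G₊ + G₋` the opposite signs of the square roots cancel everything the two Cauchy integrals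
share and keep their jump `2πi f(x)`.
-/

theorem slope_smul {k E : Type*} [Field k] [AddCommGroup E] [Module k E]
    (w : k → k) (h : k → E) (x t : k) :
    slope (fun s => w s • h s) x t = w t • slope h x t + slope w x t • h x := by
  simp only [slope_def_module, smul_eq_mul]
  module

theorem intervalIntegrable_abs_sub_rpow {a b x r : ℝ} (hr : -1 < r) :
    IntervalIntegrable (fun t : ℝ => |t - x| ^ r) volume a b := by
  have hcpow : IntervalIntegrable (fun t : ℝ => (t : ℂ) ^ (r : ℂ)) volume (a - x) (b - x) :=
    intervalIntegrable_cpow' (by simpa using hr)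
  simpa [norm_cpow_real, ← ofReal_sub] using hcpow.norm.comp_sub_right x

theorem intervalIntegrable_inv_sqrt_sub {a b : ℝ} (hab : a ≤ b) :
    IntervalIntegrable (fun t : ℝ => (√(t - a))⁻¹) volume a b := by
  refine (intervalIntegrable_abs_sub_rpow (x := a) (r := -(1 / 2)) (by norm_num)).congr
    fun t ht => ?_
  have hta : 0 ≤ t - a := sub_nonneg.mpr ((uIoc_of_le hab ▸ ht).1.le)
  rw [abs_of_nonneg hta, Real.rpow_neg hta, Real.sqrt_eq_rpow]

theorem continuousOn_inv_sqrt_sub (a : ℝ) :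
    ContinuousOn (fun t : ℝ => (√(t - a))⁻¹) (Ioi a) :=
  ContinuousOn.inv₀ (by fun_prop) fun _ ht => (Real.sqrt_pos.mpr (sub_pos.mpr ht)).ne'

theorem slope_inv_sqrt_sub {a x t : ℝ} (hx : a < x) (ht : a < t) (htx : t ≠ x) :
    slope (fun s => (√(s - a))⁻¹) x t =
      -(√(x - a) * (√(t - a) + √(x - a)))⁻¹ * (√(t - a))⁻¹ := by
  have hsx : 0 < √(x - a) := Real.sqrt_pos.mpr (sub_pos.mpr hx)
  have hst : 0 < √(t - a) := Real.sqrt_pos.mpr (sub_pos.mpr ht)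
  have hdiff : t - x = (√(t - a) - √(x - a)) * (√(t - a) + √(x - a)) := by
    linarith [Real.mul_self_sqrt (sub_pos.mpr hx).le, Real.mul_self_sqrt (sub_pos.mpr ht).le]
  have hne : √(t - a) - √(x - a) ≠ 0 := fun h0 => htx (by simpa [h0, sub_eq_zero] using hdiff)
  rw [slope_def_field, hdiff]
  field_simp
  ring

theorem intervalIntegrable_slope_inv_sqrt_sub {a b x : ℝ} (hx : x ∈ Ioo a b) :
    IntervalIntegrable (slope (fun t => (√(t - a))⁻¹) x) volume a b := by
  have hab : a ≤ b := (hx.1.trans hx.2).le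
  have hsx : 0 < √(x - a) := Real.sqrt_pos.mpr (sub_pos.mpr hx.1)
  have hcont : Continuous fun t => -(√(x - a) * (√(t - a) + √(x - a)))⁻¹ :=
    (Continuous.inv₀ (by fun_prop) fun t => by positivity).neg
  refine ((intervalIntegrable_inv_sqrt_sub hab).continuousOn_mul hcont.continuousOn).congr_ae ?_
  filter_upwards [ae_restrict_mem measurableSet_uIoc, ae_restrict_of_ae (Measure.ae_ne volume x)]
    with t ht htx
  exact (slope_inv_sqrt_sub hx.1 (uIoc_of_le hab ▸ ht).1 htx).symm

theorem intervalIntegrable_inv_sqrt_mul_abs_sub_rpow {a b x r : ℝ} (hx : x ∈ Ioo a b)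
    (hr : -1 < r) :
    IntervalIntegrable (fun t => (√(t - a))⁻¹ * |t - x| ^ r) volume a b := by
  obtain ⟨m, ham, hmx⟩ := exists_between hx.1
  have hleft : IntervalIntegrable (fun t => (√(t - a))⁻¹ * |t - x| ^ r) volume a m := by
    refine (intervalIntegrable_inv_sqrt_sub ham.le).mul_continuousOn ?_
    refine ContinuousOn.rpow_const (by fun_prop) fun t ht => Or.inl ?_
    rw [uIcc_of_le ham.le] at ht
    exact abs_ne_zero.mpr (sub_ne_zero.mpr (ht.2.trans_lt hmx).ne)
  have hright : IntervalIntegrable (fun t => (√(t - a))⁻¹ * |t - x| ^ r) volume m b := by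
    refine (intervalIntegrable_abs_sub_rpow hr).continuousOn_mul
      ((continuousOn_inv_sqrt_sub a).mono fun t ht => ?_)
    exact ham.trans_le (uIcc_of_le (hmx.trans hx.2).le ▸ ht).1
  exact hleft.trans hright

theorem continuousOn_of_dist_le_rpow {X Y : Type*} [PseudoMetricSpace X] [PseudoMetricSpace Y]
    {s : Set X} {f : X → Y} {β M : ℝ} (hβ : 0 < β)
    (hhold : ∀ x ∈ s, ∀ y ∈ s, dist (f x) (f y) ≤ M * dist x y ^ β) : ContinuousOn f s := by
  intro x hx
  have hcont : Continuous fun y => M * dist y x ^ β :=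
    continuous_const.mul ((by fun_prop : Continuous fun y => dist y x).rpow_const
      fun _ => Or.inr hβ.le)
  have hlim : Tendsto (fun y => M * dist y x ^ β) (𝓝[s] x) (𝓝 0) := by
    simpa [Real.zero_rpow hβ.ne'] using (hcont.tendsto x).mono_left nhdsWithin_le_nhds
  refine tendsto_iff_dist_tendsto_zero.mpr
    (squeeze_zero' (Eventually.of_forall fun _ => dist_nonneg) ?_ hlim)
  filter_upwards [self_mem_nhdsWithin] with y hy using hhold y hy x hx

section Slope

variable {E : Type*} [NormedAddCommGroup E] [NormedSpace ℝ E] {a b x β M : ℝ} {h : ℝ → E}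

theorem norm_slope_le_of_holder {t : ℝ} (htx : t ≠ x)
    (hhold : ‖h t - h x‖ ≤ M * |t - x| ^ β) :
    ‖slope h x t‖ ≤ M * |t - x| ^ (β - 1) := by
  have hpos : 0 < |t - x| := abs_pos.mpr (sub_ne_zero.mpr htx)
  rw [slope_def_module, norm_smul, norm_inv, Real.norm_eq_abs, Real.rpow_sub_one hpos.ne',
    ← mul_div_assoc, inv_mul_eq_div]
  gcongr

theorem intervalIntegrable_inv_sqrt_smul_slope_of_holderAt (hx : x ∈ Ioo a b) (hβ : 0 < β)
    (hmeas : AEStronglyMeasurable h (volume.restrict (Ioc a b)))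
    (hhold : ∀ t ∈ Ioc a b, ‖h t - h x‖ ≤ M * |t - x| ^ β) :
    IntervalIntegrable (fun t => (√(t - a))⁻¹ • slope h x t) volume a b := by
  rw [← uIoc_of_le (hx.1.trans hx.2).le] at hmeas hhold
  refine ((intervalIntegrable_inv_sqrt_mul_abs_sub_rpow hx (r := β - 1)
    (by linarith)).const_mul M).mono_fun' ?_ ?_
  · have hquot : AEStronglyMeasurable (fun t => (t - x)⁻¹ • (h t - h x))
        (volume.restrict (uIoc a b)) :=
      (by fun_prop : Measurable fun t : ℝ => (t - x)⁻¹).aestronglyMeasurable.smul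
        (hmeas.sub aestronglyMeasurable_const)
    exact (by fun_prop : Measurable fun t : ℝ => (√(t - a))⁻¹).aestronglyMeasurable.smul hquot
  · filter_upwards [ae_restrict_mem measurableSet_uIoc, ae_restrict_of_ae (Measure.ae_ne volume x)]
      with t ht htx
    calc ‖(√(t - a))⁻¹ • slope h x t‖ = (√(t - a))⁻¹ * ‖slope h x t‖ := by
          rw [norm_smul, Real.norm_of_nonneg (by positivity)]
      _ ≤ (√(t - a))⁻¹ * (M * |t - x| ^ (β - 1)) := by
          gcongr
          exact norm_slope_le_of_holder htx (hhold t ht)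
      _ = M * ((√(t - a))⁻¹ * |t - x| ^ (β - 1)) := by ring

theorem intervalIntegrable_slope_inv_sqrt_smul (hx : x ∈ Ioo a b)
    (hh : IntervalIntegrable (fun t => (√(t - a))⁻¹ • slope h x t) volume a b) :
    IntervalIntegrable (slope (fun t => (√(t - a))⁻¹ • h t) x) volume a b := by
  have hw := (intervalIntegrable_slope_inv_sqrt_sub hx).smul_continuousOn
    (continuousOn_const (c := h x))
  exact (hh.add hw).congr fun t _ => (slope_smul (fun s => (√(s - a))⁻¹) h x t).symm

theorem intervalIntegrable_inv_sqrt_smul_slope_of_holderOn (hx : x ∈ Ioo a b) (hβ : 0 < β)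
    (hhold : ∀ s ∈ Icc a b, ∀ t ∈ Icc a b, ‖h s - h t‖ ≤ M * |s - t| ^ β) :
    IntervalIntegrable (fun t => (√(t - a))⁻¹ • slope h x t) volume a b := by
  have hcont : ContinuousOn h (Icc a b) :=
    continuousOn_of_dist_le_rpow hβ (by simpa only [dist_eq_norm, Real.norm_eq_abs] using hhold)
  exact intervalIntegrable_inv_sqrt_smul_slope_of_holderAt hx hβ
    ((hcont.mono Ioc_subset_Icc_self).aestronglyMeasurable measurableSet_Ioc)
    fun t ht => hhold t (Ioc_subset_Icc_self ht) x (Ioo_subset_Icc_self hx)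

end Slope

theorem continuous_inv_ofReal_sub {z : ℂ} (hz : z.im ≠ 0) :
    Continuous fun t : ℝ => ((t : ℂ) - z)⁻¹ :=
  Continuous.inv₀ (by fun_prop) fun t h0 => hz (by simpa using congrArg Complex.im h0)

theorem integral_inv_ofReal_sub {a b : ℝ} {z : ℂ} (hz : z.im ≠ 0) :
    ∫ t in a..b, ((t : ℂ) - z)⁻¹ = Complex.log (b - z) - Complex.log (a - z) := by
  refine integral_eq_sub_of_hasDerivAt (f := fun t : ℝ => Complex.log ((t : ℂ) - z))
    (fun t _ => ?_) ((continuous_inv_ofReal_sub hz).intervalIntegrable a b)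
  have hderiv : HasDerivAt (fun t : ℝ => (t : ℂ) - z) 1 t := ofRealCLM.hasDerivAt.sub_const z
  simpa using hderiv.clog_real (Or.inr (by simpa using hz))

theorem norm_sub_div_sub_vertical_le_one (t x δ : ℝ) :
    ‖((t : ℂ) - x) / ((t : ℂ) - (x + δ * I))‖ ≤ 1 := by
  have hle : ‖(t : ℂ) - x‖ ≤ ‖(t : ℂ) - (x + δ * I)‖ := by
    simpa [← ofReal_sub] using abs_re_le_norm ((t : ℂ) - (x + δ * I))
  rw [norm_div]
  exact div_le_one_of_le₀ hle (norm_nonneg _)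

section CauchyIntegral

variable {E : Type*} [NormedAddCommGroup E] [NormedSpace ℂ E] {a b : ℝ}

theorem intervalIntegrable_sub_div_sub_vertical_smul {g : ℝ → E}
    (hg : IntervalIntegrable g volume a b) (x δ : ℝ) :
    IntervalIntegrable (fun t : ℝ => (((t : ℂ) - x) / ((t : ℂ) - (x + δ * I))) • g t)
      volume a b := by
  refine hg.mono_fun ?_ (Eventually.of_forall fun t => ?_)
  · exact (by fun_prop : Measurable fun t : ℝ => ((t : ℂ) - x) / ((t : ℂ) - (x + δ * I)))
      |>.aestronglyMeasurable.smul hg.def'.aestronglyMeasurable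
  · exact (norm_smul_le _ _).trans
      (mul_le_of_le_one_left (norm_nonneg _) (norm_sub_div_sub_vertical_le_one t x δ))

theorem tendsto_integral_sub_div_sub_vertical_smul {g : ℝ → E}
    (hg : IntervalIntegrable g volume a b) (x : ℝ) :
    Tendsto (fun δ : ℝ => ∫ t in a..b, (((t : ℂ) - x) / ((t : ℂ) - (x + δ * I))) • g t)
      (𝓝 0) (𝓝 (∫ t in a..b, g t)) := by
  refine tendsto_integral_filter_of_dominated_convergence (fun t => ‖g t‖) ?_ ?_ hg.norm ?_
  · exact Eventually.of_forall fun δ =>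
      (intervalIntegrable_sub_div_sub_vertical_smul hg x δ).def'.aestronglyMeasurable
  · refine Eventually.of_forall fun δ => Eventually.of_forall fun t _ => ?_
    exact (norm_smul_le _ _).trans
      (mul_le_of_le_one_left (norm_nonneg _) (norm_sub_div_sub_vertical_le_one t x δ))
  · filter_upwards [Measure.ae_ne volume x] with t htx _
    have hne : (t : ℂ) - x ≠ 0 := sub_ne_zero.mpr (by exact_mod_cast htx)
    have hcont : ContinuousAt (fun δ : ℝ => ((t : ℂ) - x) / ((t : ℂ) - (x + δ * I))) 0 :=
      ContinuousAt.div (by fun_prop) (by fun_prop) (by simpa using hne)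
    simpa [div_self hne] using hcont.tendsto.smul_const (g t)

theorem inv_sub_smul_eq_smul_slope_add (f : ℝ → E) (x t : ℝ) (z : ℂ) :
    ((t : ℂ) - z)⁻¹ • f t =
      (((t : ℂ) - x) / ((t : ℂ) - z)) • slope f x t + ((t : ℂ) - z)⁻¹ • f x := by
  have hslope : ((t : ℂ) - x) • slope f x t = f t - f x := by
    rw [← ofReal_sub, coe_smul, sub_smul_slope, vsub_eq_sub]
  rw [div_eq_inv_mul, mul_smul, hslope, ← smul_add, sub_add_cancel]

variable [CompleteSpace E]

theorem integral_inv_sub_vertical_smul {x δ : ℝ} {f : ℝ → E} (hδ : δ ≠ 0)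
    (hf : IntervalIntegrable (slope f x) volume a b) :
    ∫ t in a..b, ((t : ℂ) - (x + δ * I))⁻¹ • f t =
      (∫ t in a..b, (((t : ℂ) - x) / ((t : ℂ) - (x + δ * I))) • slope f x t) +
        (Complex.log (b - (x + δ * I)) - Complex.log (a - (x + δ * I))) • f x := by
  have him : ((x : ℂ) + δ * I).im ≠ 0 := by simpa using hδ
  have hconst : IntervalIntegrable (fun t : ℝ => ((t : ℂ) - (x + δ * I))⁻¹ • f x) volume a b :=
    ((continuous_inv_ofReal_sub him).smul continuous_const).intervalIntegrable a b
  rw [← integral_inv_ofReal_sub him, ← intervalIntegral.integral_smul_const,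
    ← intervalIntegral.integral_add (intervalIntegrable_sub_div_sub_vertical_smul hf x δ) hconst]
  simp only [← inv_sub_smul_eq_smul_slope_add]

theorem tendsto_integral_inv_sub_vertical_smul {x : ℝ} {f : ℝ → E} {l : Filter ℝ} {L : ℂ}
    (hxb : x < b) (hf : IntervalIntegrable (slope f x) volume a b) (hl : l ≤ 𝓝[≠] 0)
    (hL : Tendsto (fun δ : ℝ => Complex.log (a - (x + δ * I))) l (𝓝 L)) :
    Tendsto (fun δ : ℝ => ∫ t in a..b, ((t : ℂ) - (x + δ * I))⁻¹ • f t) l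
      (𝓝 ((∫ t in a..b, slope f x t) + (Complex.log (b - x) - L) • f x)) := by
  have hl0 : l ≤ 𝓝 0 := hl.trans nhdsWithin_le_nhds
  have hlogb : ContinuousAt (fun δ : ℝ => Complex.log (b - (x + δ * I))) 0 :=
    ContinuousAt.clog (by fun_prop) (by simpa [← ofReal_sub] using hxb)
  have hlim := ((tendsto_integral_sub_div_sub_vertical_smul hf x).mono_left hl0).add
    (((hlogb.tendsto.mono_left hl0).sub hL).smul_const (f x))
  simp only [ofReal_zero, zero_mul, add_zero] at hlim
  refine hlim.congr' ?_
  filter_upwards [hl self_mem_nhdsWithin] with δ hδ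
  exact (integral_inv_sub_vertical_smul hδ hf).symm

end CauchyIntegral

theorem tendsto_sub_vertical (a x : ℝ) :
    Tendsto (fun δ : ℝ => (a : ℂ) - (x + δ * I)) (𝓝 0) (𝓝 ((a - x : ℝ) : ℂ)) := by
  have hcont : Continuous fun δ : ℝ => (a : ℂ) - (x + δ * I) := by fun_prop
  simpa using hcont.tendsto 0

theorem tendsto_log_sub_vertical_nhdsGT {a x : ℝ} (hax : a < x) :
    Tendsto (fun δ : ℝ => Complex.log (a - (x + δ * I))) (𝓝[>] 0)
      (𝓝 (Real.log (x - a) - Real.pi * I)) := by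
  have hlim : Tendsto (fun δ : ℝ => (a : ℂ) - (x + δ * I)) (𝓝[>] 0)
      (𝓝[{z | z.im < 0}] ((a - x : ℝ) : ℂ)) := by
    refine tendsto_nhdsWithin_iff.mpr ⟨(tendsto_sub_vertical a x).mono_left nhdsWithin_le_nhds, ?_⟩
    filter_upwards [self_mem_nhdsWithin] with δ hδ using by simpa using hδ
  have hlog := tendsto_log_nhdsWithin_im_neg_of_re_neg_of_im_zero
    (z := ((a - x : ℝ) : ℂ)) (by simpa using hax) (ofReal_im _)
  rw [norm_real, Real.norm_eq_abs, abs_sub_comm, abs_of_pos (sub_pos.mpr hax)] at hlog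
  exact hlog.comp hlim

theorem tendsto_log_sub_vertical_nhdsLT {a x : ℝ} (hax : a < x) :
    Tendsto (fun δ : ℝ => Complex.log (a - (x + δ * I))) (𝓝[<] 0)
      (𝓝 (Real.log (x - a) + Real.pi * I)) := by
  have hlim : Tendsto (fun δ : ℝ => (a : ℂ) - (x + δ * I)) (𝓝[<] 0)
      (𝓝[{z | 0 ≤ z.im}] ((a - x : ℝ) : ℂ)) := by
    refine tendsto_nhdsWithin_iff.mpr ⟨(tendsto_sub_vertical a x).mono_left nhdsWithin_le_nhds, ?_⟩
    filter_upwards [self_mem_nhdsWithin] with δ hδ using by simpa using (mem_Iio.mp hδ).le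
  have hlog := tendsto_log_nhdsWithin_im_nonneg_of_re_neg_of_im_zero
    (z := ((a - x : ℝ) : ℂ)) (by simpa using hax) (ofReal_im _)
  rw [norm_real, Real.norm_eq_abs, abs_sub_comm, abs_of_pos (sub_pos.mpr hax)] at hlog
  exact hlog.comp hlim

theorem tendsto_cpow_of_tendsto_log {α : Type*} {l : Filter α} {g : α → ℂ} {L : ℂ} (w : ℂ)
    (hg : ∀ᶠ y in l, g y ≠ 0) (hL : Tendsto (fun y => Complex.log (g y)) l (𝓝 L)) :
    Tendsto (fun y => g y ^ w) l (𝓝 (Complex.exp (L * w))) := by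
  refine (hL.mul_const w).cexp.congr' ?_
  filter_upwards [hg] with y hy using (cpow_def_of_ne_zero hy w).symm

theorem exp_log_sub_pi_mul_I_half {c : ℝ} (hc : 0 < c) :
    Complex.exp ((Real.log c - Real.pi * I) * (1 / 2)) = -(√c * I) := by
  have hsqrt : (Real.log c : ℂ) * (1 / 2) = (Real.log √c : ℝ) := by
    rw [Real.log_sqrt hc.le]
    push_cast
    ring
  rw [sub_mul, hsqrt, Complex.exp_sub, ← ofReal_exp, Real.exp_log (Real.sqrt_pos.mpr hc),
    show (Real.pi * I * (1 / 2) : ℂ) = Real.pi / 2 * I by ring, exp_pi_div_two_mul_I, div_I]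

theorem exp_log_add_pi_mul_I_half {c : ℝ} (hc : 0 < c) :
    Complex.exp ((Real.log c + Real.pi * I) * (1 / 2)) = √c * I := by
  rw [show (Real.log c + Real.pi * I : ℂ) * (1 / 2) =
      (Real.log c - Real.pi * I) * (1 / 2) + Real.pi * I by ring,
    Complex.exp_add, exp_pi_mul_I, exp_log_sub_pi_mul_I_half hc]
  ring

section SqrtCauchyTransform

variable {E : Type*} [NormedAddCommGroup E] [NormedSpace ℂ E]

/-- The operator `h ↦ G` of the Riemann–Hilbert analysis: `G / (a - z)^{1/2}` is the Cauchy integral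
of `h / √(· - a)` over `[a, b]`, normalised by `1 / π`. The principal branch of the power is the
branch of `(a - z)^{1/2}` that is analytic off `[a, ∞)` and positive for real `z < a`. -/
noncomputable def sqrtCauchyTransform (a b : ℝ) (h : ℝ → E) (z : ℂ) : E :=
  (((a : ℂ) - z) ^ (1 / 2 : ℂ) / Real.pi) •
    ∫ t in a..b, ((√(t - a) : ℂ) * ((t : ℂ) - z))⁻¹ • h t

theorem sqrtCauchyTransform_eq (a b : ℝ) (h : ℝ → E) (z : ℂ) :
    sqrtCauchyTransform a b h z = (((a : ℂ) - z) ^ (1 / 2 : ℂ) / Real.pi) •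
      ∫ t in a..b, ((t : ℂ) - z)⁻¹ • ((√(t - a))⁻¹ • h t) := by
  simp only [sqrtCauchyTransform, mul_inv_rev, mul_smul, ← ofReal_inv, coe_smul]

variable [CompleteSpace E] {a b x : ℝ} {h : ℝ → E}

theorem tendsto_sqrtCauchyTransform_vertical {l : Filter ℝ} {L : ℂ} (hx : x ∈ Ioo a b)
    (hh : IntervalIntegrable (fun t => (√(t - a))⁻¹ • slope h x t) volume a b)
    (hl : l ≤ 𝓝[≠] 0)
    (hL : Tendsto (fun δ : ℝ => Complex.log (a - (x + δ * I))) l (𝓝 L)) :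
    Tendsto (fun δ : ℝ => sqrtCauchyTransform a b h (x + δ * I)) l
      (𝓝 ((Complex.exp (L * (1 / 2)) / Real.pi) •
        ((∫ t in a..b, slope (fun s => (√(s - a))⁻¹ • h s) x t) +
          (Complex.log (b - x) - L) • (√(x - a))⁻¹ • h x))) := by
  have hne (δ : ℝ) : (a : ℂ) - (x + δ * I) ≠ 0 := fun h0 =>
    hx.1.ne (by simpa [sub_eq_zero] using congrArg Complex.re h0)
  simp only [sqrtCauchyTransform_eq]
  exact ((tendsto_cpow_of_tendsto_log (1 / 2) (Eventually.of_forall hne) hL).div_const _).smul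
    (tendsto_integral_inv_sub_vertical_smul hx.2 (intervalIntegrable_slope_inv_sqrt_smul hx hh)
      hl hL)

theorem tendsto_sqrtCauchyTransform_upper (hx : x ∈ Ioo a b)
    (hh : IntervalIntegrable (fun t => (√(t - a))⁻¹ • slope h x t) volume a b) :
    Tendsto (fun δ : ℝ => sqrtCauchyTransform a b h (x + δ * I)) (𝓝[>] 0)
      (𝓝 ((-(√(x - a) * I) / Real.pi) •
        ((∫ t in a..b, slope (fun s => (√(s - a))⁻¹ • h s) x t) +
          (Complex.log (b - x) - (Real.log (x - a) - Real.pi * I)) • (√(x - a))⁻¹ • h x))) := by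
  rw [← exp_log_sub_pi_mul_I_half (sub_pos.mpr hx.1)]
  exact tendsto_sqrtCauchyTransform_vertical hx hh (nhdsGT_le_nhdsNE 0)
    (tendsto_log_sub_vertical_nhdsGT hx.1)

theorem tendsto_sqrtCauchyTransform_lower (hx : x ∈ Ioo a b)
    (hh : IntervalIntegrable (fun t => (√(t - a))⁻¹ • slope h x t) volume a b) :
    Tendsto (fun δ : ℝ => sqrtCauchyTransform a b h (x - δ * I)) (𝓝[>] 0)
      (𝓝 ((√(x - a) * I / Real.pi) •
        ((∫ t in a..b, slope (fun s => (√(s - a))⁻¹ • h s) x t) +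
          (Complex.log (b - x) - (Real.log (x - a) + Real.pi * I)) • (√(x - a))⁻¹ • h x))) := by
  have hlim := tendsto_sqrtCauchyTransform_vertical hx hh (nhdsLT_le_nhdsNE 0)
    (tendsto_log_sub_vertical_nhdsLT hx.1)
  have hneg : Tendsto Neg.neg (𝓝[>] (0 : ℝ)) (𝓝[<] 0) := by
    simpa using tendsto_neg_nhdsGT_neg (a := (0 : ℝ))
  rw [exp_log_add_pi_mul_I_half (sub_pos.mpr hx.1)] at hlim
  exact (hlim.comp hneg).congr fun δ => by
    simp only [Function.comp_apply, ofReal_neg, neg_mul, ← sub_eq_add_neg]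

theorem stmt10_general (hx : x ∈ Ioo a b)
    (hh : IntervalIntegrable (fun t => (√(t - a))⁻¹ • slope h x t) volume a b) :
    ∃ Gp Gm : E,
      Tendsto (fun δ : ℝ => sqrtCauchyTransform a b h (x + δ * I)) (𝓝[>] 0) (𝓝 Gp) ∧
      Tendsto (fun δ : ℝ => sqrtCauchyTransform a b h (x - δ * I)) (𝓝[>] 0) (𝓝 Gm) ∧
      Gp + Gm = (2 : ℂ) • h x := by
  refine ⟨_, _, tendsto_sqrtCauchyTransform_upper hx hh,
    tendsto_sqrtCauchyTransform_lower hx hh, ?_⟩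
  have hsqrt : (√(x - a) : ℂ) ≠ 0 :=
    ofReal_ne_zero.mpr (Real.sqrt_pos.mpr (sub_pos.mpr hx.1)).ne'
  have hπ : (Real.pi : ℂ) ≠ 0 := ofReal_ne_zero.mpr Real.pi_ne_zero
  rw [← coe_smul (√(x - a))⁻¹, ofReal_inv]
  match_scalars
  · ring
  · field_simp
    linear_combination (-2 * Real.pi : ℂ) * I_sq

end SqrtCauchyTransform

/-- Sokhotski–Plemelj-type jump relation (3.6) of the `G`-function on `(u, 0)`:
for Hölder continuous `h`, the boundary values `G_±(λ₀)` exist and satisfy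
`G_+(λ₀) + G_-(λ₀) = 2 h(λ₀)`. -/
theorem stmt10 (u : ℝ) (hu : u < 0) (β M : ℝ) (hβ0 : 0 < β) (hβ1 : β ≤ 1)
    (h : ℝ → ℝ)
    (hhold : ∀ x ∈ Set.Icc u (0 : ℝ), ∀ y ∈ Set.Icc u (0 : ℝ),
      |h x - h y| ≤ M * |x - y| ^ β)
    (G : ℂ → ℂ)
    (hG : ∀ l : ℂ, G l = (((u : ℂ) - l) ^ ((1 : ℂ) / 2)) / (Real.pi : ℂ) *
        ∫ η in u..(0 : ℝ), (h η : ℂ) / ((Real.sqrt (η - u) : ℂ) * ((η : ℂ) - l))) :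
    ∀ l₀ ∈ Set.Ioo u (0 : ℝ),
      ∃ Gp Gm : ℂ,
        Tendsto (fun δ : ℝ => G ((l₀ : ℂ) + δ * Complex.I))
          (nhdsWithin 0 (Set.Ioi 0)) (nhds Gp) ∧
        Tendsto (fun δ : ℝ => G ((l₀ : ℂ) - δ * Complex.I))
          (nhdsWithin 0 (Set.Ioi 0)) (nhds Gm) ∧
        Gp + Gm = 2 * (h l₀ : ℂ) := by
  intro l₀ hl₀
  obtain rfl : G = sqrtCauchyTransform u 0 fun η => (h η : ℂ) :=
    funext fun l => by simp only [hG, sqrtCauchyTransform, smul_eq_mul, div_eq_inv_mul]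
  exact stmt10_general hl₀ (intervalIntegrable_inv_sqrt_smul_slope_of_holderOn hl₀ hβ0
    (by simpa only [← ofReal_sub, norm_real, Real.norm_eq_abs] using hhold))
end

section
/- Let $u \in \mathbb{R}$, $\delta > 0$, and let $h : [u - \delta, u] \to \mathbb{R}$ be continuous with $h(u) < 0$. Define $F(\lambda) = \int_\lambda^u h(\xi) \sqrt{\xi - \lambda}\,d\xi$ for $\lambda \in [u - \delta, u]$. Then there is $\delta' \in (0, \delta]$ such that $F(\lambda) < 0$ for $\lambda \in [u - \delta', u)$, and the function $\zeta(\lambda) := -\big( -\tfrac{3}{2} F(\lambda) \big)^{2/3}$ (real $2/3$-power of a positive number), extended by $\zeta(u) = 0$, satisfies $\lim_{\lambda \to u^-} \frac{\zeta(\lambda)}{\lambda - u} = (-h(u))^{2/3}$. -/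
open Set MeasureTheory intervalIntegral Filter

/-!
The kernel `(ξ - l) ^ (p - 1)` has total mass `(u - l) ^ p / p` over `(l, u)`, so as `l → u⁻` the
integral `F(l)` of `h` against it is that mass times the limit `c` of `h` at `u⁻`, with an error of
at most the mass times the supremum of `|h - c|` over `(l, u)`. Hence
`-p F(l) / (u - l) ^ p → -c > 0`, and taking `p`-th roots turns the power `(u - l) ^ p` into the
distance `u - l`. The Airy case is `p = 3 / 2`.
-/

open Asymptotics Topology

section WeightedAverage

variable {X E : Type*} [MeasurableSpace X] [NormedAddCommGroup E] [NormedSpace ℝ E]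
  [CompleteSpace E] {μ : Measure X} {h : X → E} {c : E}

theorem norm_integral_smul_sub_integral_smul_le {w : X → ℝ} {ε : ℝ} (hw : Integrable w μ)
    (hw_nonneg : 0 ≤ᵐ[μ] w) (hh : AEStronglyMeasurable h μ) (hhc : ∀ᵐ x ∂μ, ‖h x - c‖ ≤ ε) :
    ‖(∫ x, w x • h x ∂μ) - (∫ x, w x ∂μ) • c‖ ≤ ε * ∫ x, w x ∂μ := by
  have hdiff : Integrable (fun x => w x • (h x - c)) μ :=
    hw.smul_bdd ε (hh.sub aestronglyMeasurable_const) hhc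
  have hwc : Integrable (fun x => w x • c) μ := hw.smul_const c
  have hsplit : ∫ x, w x • h x ∂μ = (∫ x, w x • (h x - c) ∂μ) + (∫ x, w x ∂μ) • c := by
    rw [← _root_.integral_smul_const, ← integral_add hdiff hwc]
    simp only [smul_sub, sub_add_cancel]
  rw [hsplit, add_sub_cancel_right, ← MeasureTheory.integral_const_mul]
  refine norm_integral_le_of_norm_le (hw.const_mul ε) ?_
  filter_upwards [hw_nonneg, hhc] with x hwx hhx
  rw [norm_smul, Real.norm_of_nonneg hwx, mul_comm]
  exact mul_le_mul_of_nonneg_right hhx hwx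

theorem isLittleO_setIntegral_smul_sub_setIntegral_smul {ι : Type*} {L : Filter ι} {k : Filter X}
    {s : ι → Set X} {w : ι → X → ℝ} (hs : Tendsto s L k.smallSets)
    (hs_meas : ∀ᶠ i in L, MeasurableSet (s i)) (hw : ∀ᶠ i in L, IntegrableOn (w i) (s i) μ)
    (hw_nonneg : ∀ᶠ i in L, ∀ x ∈ s i, 0 ≤ w i x) (hh : StronglyMeasurableAtFilter h k μ)
    (hhc : Tendsto h k (𝓝 c)) :
    (fun i => (∫ x in s i, w i x • h x ∂μ) - (∫ x in s i, w i x ∂μ) • c) =o[L]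
      fun i => ∫ x in s i, w i x ∂μ := by
  refine isLittleO_iff.2 fun ε hε => ?_
  have hclose : ∀ᶠ x in k, ‖h x - c‖ ≤ ε := by
    simpa only [dist_eq_norm] using hhc.eventually (Metric.closedBall_mem_nhds c hε)
  filter_upwards [hs_meas, hw, hw_nonneg, hs.eventually hh.eventually,
    hs.eventually hclose.smallSets] with i hsi hwi hwi_nonneg hhi hclose_i
  calc
    _ ≤ ε * ∫ x in s i, w i x ∂μ :=
      norm_integral_smul_sub_integral_smul_le hwi (ae_restrict_of_forall_mem hsi hwi_nonneg) hhi
        (ae_restrict_of_forall_mem hsi hclose_i)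
    _ ≤ ε * ‖∫ x in s i, w i x ∂μ‖ := by gcongr; exact Real.le_norm_self _

end WeightedAverage

section LeftNeighborhood

variable {u : ℝ}

theorem tendsto_Ioo_smallSets_nhdsLT :
    Tendsto (fun l => Ioo l u) (𝓝[<] u) (𝓝[<] u).smallSets := by
  refine tendsto_smallSets_iff.2 fun t ht => ?_
  obtain ⟨a, ha, hat⟩ := mem_nhdsLT_iff_exists_Ioo_subset.1 ht
  filter_upwards [Ioo_mem_nhdsLT ha] with l hl
  exact (Ioo_subset_Ioo_left hl.1.le).trans hat

theorem exists_pos_le_forall_mem_Ico_sub {P : ℝ → Prop} (hP : ∀ᶠ l in 𝓝[<] u, P l) {δ : ℝ}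
    (hδ : 0 < δ) : ∃ δ' : ℝ, 0 < δ' ∧ δ' ≤ δ ∧ ∀ l ∈ Ico (u - δ') u, P l := by
  obtain ⟨a, ha, hsub⟩ := mem_nhdsLT_iff_exists_Ico_subset.1 hP
  refine ⟨min δ (u - a), lt_min hδ (sub_pos.2 ha), min_le_left _ _, fun l hl => hsub ⟨?_, hl.2⟩⟩
  linarith [hl.1, min_le_right δ (u - a)]

end LeftNeighborhood

section PowerKernel

variable {p : ℝ}

theorem intervalIntegrable_sub_rpow_sub_one (hp : 0 < p) (l u : ℝ) :
    IntervalIntegrable (fun ξ => (ξ - l) ^ (p - 1)) volume l u := by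
  have hpow : IntervalIntegrable (fun x : ℝ => x ^ (p - 1)) volume 0 (u - l) :=
    intervalIntegrable_rpow' (by linarith)
  simpa only [zero_add, sub_add_cancel] using hpow.comp_sub_right l

theorem integral_sub_rpow_sub_one (hp : 0 < p) (l u : ℝ) :
    ∫ ξ in l..u, (ξ - l) ^ (p - 1) = (u - l) ^ p / p := by
  rw [integral_comp_sub_right (fun x => x ^ (p - 1)) l, integral_rpow (Or.inl (by linarith)),
    sub_self, sub_add_cancel, Real.zero_rpow hp.ne', sub_zero]

variable {E : Type*} [NormedAddCommGroup E] [NormedSpace ℝ E] [CompleteSpace E] {h : ℝ → E}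
  {c : E} {u : ℝ}

theorem isLittleO_integral_sub_rpow_smul_sub (hp : 0 < p)
    (hh : StronglyMeasurableAtFilter h (𝓝[<] u)) (hhc : Tendsto h (𝓝[<] u) (𝓝 c)) :
    (fun l => (∫ ξ in l..u, (ξ - l) ^ (p - 1) • h ξ) - ((u - l) ^ p / p) • c) =o[𝓝[<] u]
      fun l => (u - l) ^ p / p := by
  have hlt : ∀ᶠ l in 𝓝[<] u, l < u := self_mem_nhdsWithin
  have hkernel : ∀ᶠ l in 𝓝[<] u,
      IntegrableOn (fun ξ => (ξ - l) ^ (p - 1)) (Ioo l u) := hlt.mono fun l hl =>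
    (intervalIntegrable_iff_integrableOn_Ioo_of_le hl.le).1
      (intervalIntegrable_sub_rpow_sub_one hp l u)
  have hnonneg : ∀ᶠ l in 𝓝[<] u, ∀ ξ ∈ Ioo l u, 0 ≤ (ξ - l) ^ (p - 1) :=
    Eventually.of_forall fun l ξ hξ => Real.rpow_nonneg (sub_nonneg.2 hξ.1.le) _
  refine (isLittleO_setIntegral_smul_sub_setIntegral_smul tendsto_Ioo_smallSets_nhdsLT
    (Eventually.of_forall fun _ => measurableSet_Ioo) hkernel hnonneg hh hhc).congr' ?_ ?_
  all_goals
    filter_upwards [hlt] with l hl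
    simp only [← integral_sub_rpow_sub_one hp, integral_of_le hl.le, integral_Ioc_eq_integral_Ioo]

theorem tendsto_inv_rpow_smul_integral_sub_rpow_smul (hp : 0 < p)
    (hh : StronglyMeasurableAtFilter h (𝓝[<] u)) (hhc : Tendsto h (𝓝[<] u) (𝓝 c)) :
    Tendsto (fun l => ((u - l) ^ p / p)⁻¹ • ∫ ξ in l..u, (ξ - l) ^ (p - 1) • h ξ) (𝓝[<] u)
      (𝓝 c) := by
  have hrem := (isLittleO_integral_sub_rpow_smul_sub hp hh hhc).tendsto_inv_smul_nhds_zero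
  rw [← zero_add c]
  refine (hrem.add_const c).congr' ?_
  filter_upwards [self_mem_nhdsWithin] with l (hl : l < u)
  have hmass : (u - l) ^ p / p ≠ 0 :=
    (div_pos (Real.rpow_pos_of_pos (sub_pos.2 hl) p) hp).ne'
  rw [smul_sub, inv_smul_smul₀ hmass, sub_add_cancel]

end PowerKernel

theorem tendsto_rpow_inv_div_of_tendsto_div_rpow {α : Type*} {L : Filter α} {f g : α → ℝ}
    {p b : ℝ} (hp : 0 < p) (hf : ∀ᶠ x in L, 0 ≤ f x) (hg : ∀ᶠ x in L, 0 ≤ g x)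
    (hfg : Tendsto (fun x => f x / g x ^ p) L (𝓝 b)) :
    Tendsto (fun x => f x ^ p⁻¹ / g x) L (𝓝 (b ^ p⁻¹)) := by
  refine (hfg.rpow_const (Or.inr (inv_nonneg.2 hp.le))).congr' ?_
  filter_upwards [hf, hg] with x hfx hgx
  rw [Real.div_rpow hfx (Real.rpow_nonneg hgx p), Real.rpow_rpow_inv hgx hp.ne']

theorem stmt14_general {u δ p c : ℝ} (hδ : 0 < δ) (hp : 0 < p) {h F ζ : ℝ → ℝ}
    (hh : AEStronglyMeasurable h (volume.restrict (Icc (u - δ) u)))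
    (hhc : Tendsto h (𝓝[<] u) (𝓝 c)) (hc : c < 0)
    (hF : ∀ l ∈ Icc (u - δ) u, F l = ∫ ξ in l..u, h ξ * (ξ - l) ^ (p - 1))
    (hζ : ∀ l ∈ Icc (u - δ) u, ζ l = -(-p * F l) ^ p⁻¹) :
    ∃ δ' : ℝ, 0 < δ' ∧ δ' ≤ δ ∧ (∀ l ∈ Ico (u - δ') u, F l < 0) ∧
      Tendsto (fun l => ζ l / (l - u)) (𝓝[<] u) (𝓝 ((-c) ^ p⁻¹)) := by
  have hnear : Icc (u - δ) u ∈ 𝓝[<] u := Icc_mem_nhdsLT (sub_lt_self u hδ)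
  have hlt : ∀ᶠ l in 𝓝[<] u, 0 < u - l :=
    eventually_mem_nhdsWithin.mono fun l hl => sub_pos.2 hl
  have hratio : Tendsto (fun l => -p * F l / (u - l) ^ p) (𝓝[<] u) (𝓝 (-c)) := by
    refine (tendsto_inv_rpow_smul_integral_sub_rpow_smul hp ⟨_, hnear, hh⟩ hhc).neg.congr' ?_
    filter_upwards [hnear] with l hl
    simp only [hF l hl, smul_eq_mul, mul_comm (h _), inv_div]
    ring
  have hpos : ∀ᶠ l in 𝓝[<] u, 0 < -p * F l := by
    filter_upwards [hratio.eventually_const_lt (neg_pos.2 hc), hlt] with l hl hul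
    exact (div_pos_iff_of_pos_right (Real.rpow_pos_of_pos hul p)).1 hl
  obtain ⟨δ', hδ'_pos, hδ'_le, hδ'⟩ := exists_pos_le_forall_mem_Ico_sub hpos hδ
  refine ⟨δ', hδ'_pos, hδ'_le,
    fun l hl => neg_of_mul_pos_right (hδ' l hl) (neg_nonpos.2 hp.le), ?_⟩
  refine (tendsto_rpow_inv_div_of_tendsto_div_rpow hp (hpos.mono fun _ => le_of_lt)
    (hlt.mono fun _ => le_of_lt) hratio).congr' ?_
  filter_upwards [hnear] with l hl
  rw [hζ l hl, ← neg_sub u l, neg_div_neg_eq]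

/-- Equations (3.37)-(3.38) (one-sided real version): the Airy-type conformal map
`ζ(λ) = -(-3/2 F(λ))^{2/3}` built from `F(λ) = ∫_λ^u h(ξ)√(ξ-λ) dξ` with `h(u) < 0`
satisfies `lim_{λ→u⁻} ζ(λ)/(λ-u) = (-h(u))^{2/3}`. -/
theorem stmt14 (u δ : ℝ) (hδ : 0 < δ) (h : ℝ → ℝ)
    (hc : ContinuousOn h (Set.Icc (u - δ) u)) (hu : h u < 0)
    (F : ℝ → ℝ)
    (hF : ∀ l ∈ Set.Icc (u - δ) u, F l = ∫ ξ in l..u, h ξ * Real.sqrt (ξ - l))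
    (ζ : ℝ → ℝ)
    (hζ : ∀ l ∈ Set.Icc (u - δ) u, ζ l = -((-(3 / 2 : ℝ) * F l) ^ ((2 : ℝ) / 3)))
    (hζu : ζ u = 0) :
    ∃ δ' : ℝ, 0 < δ' ∧ δ' ≤ δ ∧ (∀ l ∈ Set.Ico (u - δ') u, F l < 0) ∧
      Tendsto (fun l => ζ l / (l - u)) (nhdsWithin u (Set.Iio u))
        (nhds ((-h u) ^ ((2 : ℝ) / 3))) := by
  have hsqrt (x : ℝ) : √x = x ^ ((3 / 2 : ℝ) - 1) := by rw [Real.sqrt_eq_rpow]; norm_num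
  simp only [hsqrt, ← inv_div (3 : ℝ) 2] at hF hζ ⊢
  exact stmt14_general hδ (by norm_num) (hc.aestronglyMeasurable measurableSet_Icc)
    ((hc u (right_mem_Icc.2 (by linarith))).mono_of_mem_nhdsWithin
      (Icc_mem_nhdsLT (by linarith))) hu hF hζ
end
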